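/- Let μ be a full Borel probability measure on ℝ^d. Call a nonzero idempotent matrix J ∈ D(μ) primitive if there is no nonzero idempotent K ∈ D(μ) with K ≠ J satisfying JK = KJ = K. Then there exist an integer q with 1 ≤ q ≤ d and nonzero primitive idempotents J_1, …, J_q ∈ D(μ) such that J_1 + J_2 + … + J_q = I and J_r J_s = J_s J_r = 0 whenever 1 ≤ r ≠ s ≤ q. -/

import Mathlib

open MeasureTheory Filter Topology Matrix

/-- Convolution of two Borel measures on `ℝ^d`. -/
noncomputable def mconv {d : ℕ} (μ ν : Measure (Fin d → ℝ)) : Measure (Fin d → ℝ) :=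
  (μ.prod ν).map (fun p => p.1 + p.2)

/-- The Urbanik decomposability semigroup `D(μ)`: all matrices `A` such that
`μ = (A_*μ) ∗ ν` for some probability measure `ν`. -/
def UrbanikD {d : ℕ} (μ : Measure (Fin d → ℝ)) : Set (Matrix (Fin d) (Fin d) ℝ) :=
  {A | ∃ ν : Measure (Fin d → ℝ), IsProbabilityMeasure ν ∧ μ = mconv (μ.map A.mulVec) ν}

/-- A measure on `ℝ^d` is full if its support is not contained in any hyperplane,
i.e. no translate `v + L` of a proper linear subspace `L` carries all of its mass. -/
def IsFull {d : ℕ} (μ : Measure (Fin d → ℝ)) : Prop :=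
  ∀ (v : Fin d → ℝ) (L : Submodule ℝ (Fin d → ℝ)), L ≠ ⊤ → μ {x | x - v ∈ L} < 1

/-- Weak convergence of a sequence of measures on `ℝ^d`. -/
def WeakLim {d : ℕ} (μs : ℕ → Measure (Fin d → ℝ)) (μ : Measure (Fin d → ℝ)) : Prop :=
  ∀ f : BoundedContinuousFunction (Fin d → ℝ) ℝ,
    Tendsto (fun n => ∫ x, f x ∂(μs n)) atTop (𝓝 (∫ x, f x ∂μ))

/-- Partial sums `S_n = X_1 + ... + X_n`. -/
def partialSum {Ω : Type*} {d : ℕ} (X : ℕ → Ω → (Fin d → ℝ)) (n : ℕ) (ω : Ω) :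
    Fin d → ℝ :=
  ∑ j ∈ Finset.Icc 1 n, X j ω

/-- The triangular array `(A_n X_j : 1 ≤ j ≤ n, n ≥ 1)` is infinitesimal:
`sup_{1 ≤ j ≤ n} P(‖A_n X_j‖ ≥ ε) → 0` as `n → ∞`, for every `ε > 0`. -/
def Infinitesimal {Ω : Type*} [MeasurableSpace Ω] {d : ℕ} (P : Measure Ω)
    (A : ℕ → Matrix (Fin d) (Fin d) ℝ) (X : ℕ → Ω → (Fin d → ℝ)) : Prop :=
  ∀ ε > (0 : ℝ), ∀ δ > (0 : ℝ), ∃ N : ℕ, ∀ n ≥ N, ∀ j : ℕ, 1 ≤ j → j ≤ n →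
    (P {ω | ε ≤ ‖(A n).mulVec (X j ω)‖}).toReal < δ

/-- A nonzero idempotent `J ∈ D(μ)` is primitive if there is no nonzero idempotent
`K ∈ D(μ)`, `K ≠ J`, with `JK = KJ = K`. -/
def IsPrimitiveIdem {d : ℕ} (μ : Measure (Fin d → ℝ)) (J : Matrix (Fin d) (Fin d) ℝ) :
    Prop :=
  J ∈ UrbanikD μ ∧ J ≠ 0 ∧ J * J = J ∧
    ¬ ∃ K ∈ UrbanikD μ, K ≠ 0 ∧ K ≠ J ∧ K * K = K ∧ J * K = K ∧ K * J = K

/-!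
If `P ∈ D(μ)` is idempotent and `μ = P_*μ ∗ ν`, applying `P` gives `P_*μ = P_*μ ∗ P_*ν`. The
characteristic function of `P_*ν` is then `1` wherever that of `P_*μ` does not vanish, in particular
near `0`, and this forces `P_*ν = δ₀`. Hence `ν` lives on the kernel of `P`, so `ν = (I - P)_*μ`,
and `I - P ∈ D(μ)`. Thus `D(μ)` is a multiplicative monoid closed under complements of idempotents,
and in any such monoid inside an Artinian ring one can keep splitting off primitive idempotents from
`1` until nothing remains. At most `d` of them occur, because nonzero vectors chosen from the
ranges of orthogonal idempotents are linearly independent.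
-/

section Convolution

variable {E : Type*} [NormedAddCommGroup E] [NormedSpace ℝ E] [MeasurableSpace E]

lemma charFunDual_eq_one_iff {μ : Measure E} [IsProbabilityMeasure μ] {L : StrongDual ℝ E} :
    charFunDual μ L = 1 ↔ ∀ᵐ x ∂μ, Complex.exp (L x * Complex.I) = 1 := by
  refine ⟨fun h => ?_, fun h => by simp [charFunDual_apply, integral_congr_ae h]⟩
  have hbound : ∀ᵐ x ∂μ, ‖Complex.exp (L x * Complex.I)‖ ≤ 1 :=
    ae_of_all _ fun x => (Complex.norm_exp_ofReal_mul_I (L x)).le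
  rw [charFunDual_apply] at h
  -- By strict convexity of `ℂ`, a unimodular function whose mean has modulus one is a.e. constant.
  rcases ae_eq_const_or_norm_average_lt_of_norm_le_const hbound with hconst | hlt
  · rwa [average_eq_integral, h] at hconst
  · simp [average_eq_integral, h] at hlt

lemma charFunDual_nsmul_eq_one {μ : Measure E} [IsProbabilityMeasure μ] {L : StrongDual ℝ E}
    (h : charFunDual μ L = 1) (n : ℕ) : charFunDual μ (n • L) = 1 := by
  rw [charFunDual_eq_one_iff] at h ⊢
  filter_upwards [h] with x hx
  rw [_root_.smul_apply, nsmul_eq_mul, Complex.ofReal_mul, Complex.ofReal_natCast,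
    mul_assoc, Complex.exp_nat_mul, hx, one_pow]

lemma eventually_charFunDual_smul_ne_zero [OpensMeasurableSpace E] (μ : Measure E)
    [IsFiniteMeasure μ] [NeZero μ] (L : StrongDual ℝ E) :
    ∀ᶠ t in 𝓝 (0 : ℝ), charFunDual μ (t • L) ≠ 0 := by
  have hzero : charFun (μ.map L) 0 ≠ 0 := by
    rw [charFun_map_eq_charFunDual_smul, zero_smul]
    simp [charFunDual_apply, measureReal_eq_zero_iff, NeZero.ne μ]
  simpa only [charFun_map_eq_charFunDual_smul] using
    (continuous_charFun (μ := μ.map L)).continuousAt.eventually_ne hzero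

variable [BorelSpace E]

lemma map_map_clm (A B : E →L[ℝ] E) (μ : Measure E) : (μ.map B).map A = μ.map (A * B) :=
  Measure.map_map A.measurable B.measurable

variable [SecondCountableTopology E] [CompleteSpace E]

theorem eq_dirac_zero_of_conv_eq_left {μ ν : Measure E} [IsFiniteMeasure μ] [NeZero μ]
    [IsProbabilityMeasure ν] (h : μ ∗ ν = μ) : ν = Measure.dirac 0 := by
  refine Measure.ext_of_charFunDual (funext fun L => ?_)
  obtain ⟨n, hn⟩ : ∃ n : ℕ, charFunDual μ ((1 / ((n : ℝ) + 1)) • L) ≠ 0 :=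
    (tendsto_one_div_add_atTop_nhds_zero_nat.eventually
      (eventually_charFunDual_smul_ne_zero μ L)).exists
  have hone : charFunDual ν ((1 / ((n : ℝ) + 1)) • L) = 1 :=
    mul_left_cancel₀ hn (by rw [← charFunDual_conv, h, mul_one])
  have hL : (n + 1) • (1 / ((n : ℝ) + 1)) • L = L := by
    rw [← Nat.cast_smul_eq_nsmul ℝ, smul_smul, Nat.cast_succ,
      mul_one_div_cancel (Nat.cast_add_one_ne_zero n), one_smul]
  calc charFunDual ν L = 1 := hL ▸ charFunDual_nsmul_eq_one hone (n + 1)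
    _ = charFunDual (Measure.dirac 0) L := by simp [charFunDual_dirac]

theorem map_one_sub_eq_of_eq_map_conv {μ ν : Measure E} [IsProbabilityMeasure μ]
    [IsProbabilityMeasure ν] {P : E →L[ℝ] E} (hP : IsIdempotentElem P) (h : μ = μ.map P ∗ ν) :
    μ.map (1 - P : E →L[ℝ] E) = ν := by
  have hμP := Measure.isProbabilityMeasure_map (μ := μ) P.continuous.aemeasurable
  have hνP := Measure.isProbabilityMeasure_map (μ := ν) P.continuous.aemeasurable
  have hν_dirac : ν.map P = Measure.dirac 0 := by
    refine eq_dirac_zero_of_conv_eq_left (μ := μ.map P) ?_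
    conv_rhs => rw [h, Measure.map_conv_continuousLinearMap, map_map_clm, hP.eq]
  have hν_ker : ∀ᵐ x ∂ν, P x = 0 :=
    ae_of_ae_map (p := (· = 0)) P.continuous.aemeasurable (by simp [hν_dirac, ae_dirac_eq])
  have hν_fixed : ν.map (1 - P : E →L[ℝ] E) = ν := by
    conv_rhs => rw [← Measure.map_id (μ := ν)]
    exact Measure.map_congr (hν_ker.mono fun x hx => by simp [hx])
  calc μ.map (1 - P : E →L[ℝ] E) = (μ.map P ∗ ν).map (1 - P : E →L[ℝ] E) := by rw [← h]
    _ = μ.map ((1 - P) * P : E →L[ℝ] E) ∗ ν.map (1 - P : E →L[ℝ] E) := by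
      rw [Measure.map_conv_continuousLinearMap, map_map_clm]
    _ = Measure.dirac 0 ∗ ν := by
      rw [hP.one_sub_mul_self, hν_fixed, FunLike.coe_zero]
      simp [Pi.zero_def, Measure.map_const]
    _ = ν := Measure.dirac_zero_conv ν

/-- The Urbanik decomposability semigroup of a probability measure `μ` on a Banach space: the
continuous linear maps `A` for which `A_*μ` is a convolution factor of `μ`, with a probability
measure as cofactor. -/
def decomposabilitySubmonoid (μ : Measure E) [IsProbabilityMeasure μ] : Submonoid (E →L[ℝ] E) where
  carrier := {A | ∃ ν : Measure E, IsProbabilityMeasure ν ∧ μ = μ.map A ∗ ν}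
  one_mem' := ⟨Measure.dirac 0, inferInstance, by simp⟩
  mul_mem' := by
    rintro A B ⟨ν, hν, hA⟩ ⟨ρ, hρ, hB⟩
    have hρA := Measure.isProbabilityMeasure_map (μ := ρ) A.continuous.aemeasurable
    refine ⟨ρ.map A ∗ ν, inferInstance, ?_⟩
    calc μ = μ.map A ∗ ν := hA
      _ = (μ.map B ∗ ρ).map A ∗ ν := by rw [← hB]
      _ = (μ.map (A * B) ∗ ρ.map A) ∗ ν := by
        rw [Measure.map_conv_continuousLinearMap, map_map_clm]
      _ = μ.map (A * B) ∗ (ρ.map A ∗ ν) := Measure.conv_assoc _ _ _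

theorem one_sub_mem_decomposabilitySubmonoid {μ : Measure E} [IsProbabilityMeasure μ]
    {P : E →L[ℝ] E} (hmem : P ∈ decomposabilitySubmonoid μ) (hP : IsIdempotentElem P) :
    1 - P ∈ decomposabilitySubmonoid μ := by
  obtain ⟨ν, hν, h⟩ := hmem
  refine ⟨μ.map P, Measure.isProbabilityMeasure_map P.continuous.aemeasurable, ?_⟩
  rw [map_one_sub_eq_of_eq_map_conv hP h, Measure.conv_comm]
  exact h

end Convolution

section PrimitiveIdempotents

variable {R : Type*} [Ring R]

/-- An idempotent `e ∈ S` is primitive relative to `S` if it is nonzero and minimal among the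
nonzero idempotents of `S`, for the order in which `f ≤ e` means `e * f = f = f * e`. For
`S = Set.univ` this is the usual notion of a primitive idempotent of `R`. -/
structure IsPrimitiveIdempotentIn (S : Set R) (e : R) : Prop where
  mem : e ∈ S
  ne_zero : e ≠ 0
  isIdempotentElem : IsIdempotentElem e
  eq_of_le : ∀ f ∈ S, f ≠ 0 → IsIdempotentElem f → e * f = f → f * e = f → f = e

lemma span_singleton_lt_span_singleton_of_mul_eq {e f : R} (hf : IsIdempotentElem f)
    (hef : e * f = f) (hfe : f * e = f) (hne : f ≠ e) :
    Ideal.span {f} < Ideal.span {e} := by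
  simp only [lt_iff_le_not_ge, Ideal.span_singleton_le_iff_mem, Ideal.mem_span_singleton']
  refine ⟨⟨f, hfe⟩, fun ⟨a, ha⟩ => hne ?_⟩
  calc f = e * f := hef.symm
    _ = a * (f * f) := by rw [← ha, mul_assoc]
    _ = e := by rw [hf.eq, ha]

variable [IsArtinianRing R]

theorem exists_isPrimitiveIdempotentIn_le (S : Set R) {e : R} (hmem : e ∈ S) (hne : e ≠ 0)
    (he : IsIdempotentElem e) :
    ∃ f, IsPrimitiveIdempotentIn S f ∧ e * f = f ∧ f * e = f := by
  obtain ⟨f, ⟨hfS, hf0, hf, hef, hfe⟩, hmin⟩ := exists_minimalFor_of_wellFoundedLT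
    (fun f => f ∈ S ∧ f ≠ 0 ∧ IsIdempotentElem f ∧ e * f = f ∧ f * e = f)
    (fun f => Ideal.span {f}) ⟨e, hmem, hne, he, he, he⟩
  refine ⟨f, ⟨hfS, hf0, hf, fun g hgS hg0 hg hfg hgf => ?_⟩, hef, hfe⟩
  have heg : e * g = g := by rw [← hfg, ← mul_assoc, hef]
  have hge : g * e = g := by rw [← hgf, mul_assoc, hfe]
  by_contra hgne
  have hlt := span_singleton_lt_span_singleton_of_mul_eq hg hfg hgf hgne
  exact hlt.not_ge (hmin ⟨hgS, hg0, hg, heg, hge⟩ hlt.le)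

theorem exists_orthogonalIdempotents_sum_eq {S : Submonoid R}
    (hS : ∀ e ∈ S, IsIdempotentElem e → 1 - e ∈ S) {e : R} (hmem : e ∈ S)
    (he : IsIdempotentElem e) :
    ∃ (ι : Type) (_ : Fintype ι) (f : ι → R), OrthogonalIdempotents f ∧ ∑ i, f i = e ∧
      ∀ i, IsPrimitiveIdempotentIn (S : Set R) (f i) := by
  induction hI : Ideal.span {e} using WellFoundedLT.induction generalizing e with
  | ind I ih =>
    by_cases hne : e = 0
    · exact ⟨Empty, inferInstance, Empty.elim, ⟨(nomatch ·), fun i => nomatch i⟩, by simp [hne],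
        (nomatch ·)⟩
    obtain ⟨f, hf, hef, hfe⟩ := exists_isPrimitiveIdempotentIn_le (S : Set R) hmem hne he
    have hmem' : e - f ∈ S := by
      simpa only [mul_sub, mul_one, hef] using S.mul_mem hmem (hS f hf.mem hf.isIdempotentElem)
    have hidem' : IsIdempotentElem (e - f) := hf.isIdempotentElem.sub he hfe hef
    have hlt : Ideal.span {e - f} < I := hI ▸ span_singleton_lt_span_singleton_of_mul_eq hidem'
      (by rw [mul_sub, he.eq, hef]) (by rw [sub_mul, he.eq, hfe])
      (by simpa using hf.ne_zero)
    obtain ⟨ι, hι, g, hg, hsum, hprim⟩ := ih _ hlt hmem' hidem' rfl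
    refine ⟨Option ι, inferInstance, (Option.elim · f g), hg.option f hf.isIdempotentElem ?_ ?_,
      ?_, Option.rec hf hprim⟩
    · rw [hsum, mul_sub, hfe, hf.isIdempotentElem.eq, sub_self]
    · rw [hsum, sub_mul, hef, hf.isIdempotentElem.eq, sub_self]
    · simp [Fintype.sum_option, hsum]

theorem exists_completeOrthogonalIdempotents_isPrimitiveIdempotentIn {S : Submonoid R}
    (hS : ∀ e ∈ S, IsIdempotentElem e → 1 - e ∈ S) :
    ∃ (n : ℕ) (e : Fin n → R), CompleteOrthogonalIdempotents e ∧
      ∀ i, IsPrimitiveIdempotentIn (S : Set R) (e i) := by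
  obtain ⟨ι, _, e, he, hsum, hprim⟩ := exists_orthogonalIdempotents_sum_eq hS S.one_mem .one
  exact ⟨Fintype.card ι, e ∘ (Fintype.equivFin ι).symm,
    (CompleteOrthogonalIdempotents.equiv _).2 ⟨he, hsum⟩, fun i => hprim _⟩

end PrimitiveIdempotents

theorem card_le_finrank_of_orthogonalIdempotents {K V ι : Type*} [DivisionRing K] [AddCommGroup V]
    [Module K V] [FiniteDimensional K V] [Fintype ι] {e : ι → Module.End K V}
    (he : OrthogonalIdempotents e) (hne : ∀ i, e i ≠ 0) :
    Fintype.card ι ≤ Module.finrank K V := by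
  classical
  choose v hv using fun i => DFunLike.ne_iff.1 (hne i)
  have happly : ∀ i j, e i (e j (v j)) = if i = j then e i (v i) else 0 := fun i j => by
    rw [← Module.End.mul_apply, he.mul_eq]
    split_ifs with hij
    · rw [hij]
    · rfl
  have hindep : LinearIndependent K fun i => e i (v i) := by
    refine Fintype.linearIndependent_iff.2 fun c hc i => ?_
    have hci : c i • e i (v i) = 0 := by simpa [happly, -smul_eq_zero] using congrArg (e i) hc
    exact (smul_eq_zero.1 hci).resolve_right (hv i)
  exact hindep.fintype_card_le_finrank

section UrbanikD

variable {d : ℕ}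

/-- The set `UrbanikD μ` as a submonoid of the matrix ring, obtained from
`decomposabilitySubmonoid μ` by viewing matrices as continuous linear maps of `ℝ^d`. -/
noncomputable def urbanikSubmonoid (μ : Measure (Fin d → ℝ)) [IsProbabilityMeasure μ] :
    Submonoid (Matrix (Fin d) (Fin d) ℝ) :=
  (decomposabilitySubmonoid μ).comap
    (Matrix.toLinAlgEquiv'.trans (Module.End.toContinuousLinearMap (Fin d → ℝ)))

lemma coe_urbanikSubmonoid (μ : Measure (Fin d → ℝ)) [IsProbabilityMeasure μ] :
    (urbanikSubmonoid μ : Set (Matrix (Fin d) (Fin d) ℝ)) = UrbanikD μ :=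
  rfl

lemma one_sub_mem_urbanikSubmonoid {μ : Measure (Fin d → ℝ)} [IsProbabilityMeasure μ]
    {J : Matrix (Fin d) (Fin d) ℝ} (hmem : J ∈ urbanikSubmonoid μ) (hJ : IsIdempotentElem J) :
    1 - J ∈ urbanikSubmonoid μ := by
  rw [urbanikSubmonoid, Submonoid.mem_comap] at hmem ⊢
  rw [map_sub, map_one]
  exact one_sub_mem_decomposabilitySubmonoid hmem (hJ.map _)

lemma IsPrimitiveIdempotentIn.isPrimitiveIdem {μ : Measure (Fin d → ℝ)}
    {J : Matrix (Fin d) (Fin d) ℝ} (h : IsPrimitiveIdempotentIn (UrbanikD μ) J) :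
    IsPrimitiveIdem μ J :=
  ⟨h.mem, h.ne_zero, h.isIdempotentElem, fun ⟨K, hmem, h0, hKJ, hK, hJK, hKJ'⟩ =>
    hKJ (h.eq_of_le K hmem h0 hK hJK hKJ')⟩

end UrbanikD

theorem exists_primitive_idempotent_decomposition_general
    {d : ℕ} (hd : 0 < d) (μ : Measure (Fin d → ℝ)) [IsProbabilityMeasure μ] :
    ∃ q : ℕ, 1 ≤ q ∧ q ≤ d ∧
      ∃ J : Fin q → Matrix (Fin d) (Fin d) ℝ,
        (∀ r, IsPrimitiveIdem μ (J r)) ∧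
        (∑ r, J r) = 1 ∧
        ∀ r s, r ≠ s → J r * J s = 0 ∧ J s * J r = 0 := by
  have : Nonempty (Fin d) := ⟨⟨0, hd⟩⟩
  obtain ⟨q, J, hJ, hprim⟩ := exists_completeOrthogonalIdempotents_isPrimitiveIdempotentIn
    (S := urbanikSubmonoid μ) fun _ => one_sub_mem_urbanikSubmonoid
  rw [coe_urbanikSubmonoid] at hprim
  refine ⟨q, ?_, ?_, J, fun r => (hprim r).isPrimitiveIdem, hJ.complete,
    fun r s hrs => ⟨hJ.ortho hrs, hJ.ortho hrs.symm⟩⟩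
  · rw [Nat.one_le_iff_ne_zero]
    rintro rfl
    simpa using hJ.complete
  · simpa using card_le_finrank_of_orthogonalIdempotents
      (hJ.toOrthogonalIdempotents.map (Matrix.toLinAlgEquiv' : _ ≃ₐ[ℝ] _).toRingEquiv.toRingHom)
      fun r => by simpa using (hprim r).ne_zero

/-- **(24).** For a full probability measure `μ` on `ℝ^d` there are finitely many
nonzero primitive idempotents `J_1, ..., J_q ∈ D(μ)`, `1 ≤ q ≤ d`, with
`J_1 + ... + J_q = I` and `J_r J_s = J_s J_r = 0` for `r ≠ s`. -/
theorem exists_primitive_idempotent_decomposition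
    {d : ℕ} (hd : 0 < d) (μ : Measure (Fin d → ℝ)) [IsProbabilityMeasure μ]
    (hfull : IsFull μ) :
    ∃ q : ℕ, 1 ≤ q ∧ q ≤ d ∧
      ∃ J : Fin q → Matrix (Fin d) (Fin d) ℝ,
        (∀ r, IsPrimitiveIdem μ (J r)) ∧
        (∑ r, J r) = 1 ∧
        ∀ r s, r ≠ s → J r * J s = 0 ∧ J s * J r = 0 :=
  exists_primitive_idempotent_decomposition_general hd μ
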